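/- Let (x_i)_{i ≥ 0} be nonnegative reals with x_0 > 0 and ∑_{i=0}^{∞} x_i = 1, and set y_m = ∑_{j=m}^{∞} x_j. If ∑_{i=0}^{∞} i·x_i < ∞, then the total mass of the measure w(λ) = ∏_{i=1}^{∞} y_{λ_i} over all integer partitions is finite and equals the convergent infinite product ∑_{λ ∈ Par} ∏_{i=1}^{∞} y_{λ_i} = ∏_{m=1}^{∞} 1/(1 − y_m); moreover this total mass is finite if and only if ∑_{i=0}^{∞} i·x_i < ∞. -/

import Mathlib

/-!
The mass is computed by sorting partitions by their largest part. A partition with all parts at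
most `N + 1` is uniquely `k` copies of `N + 1` followed by a partition `μ` with all parts at most
`N`, and its weight is `y (N + 1) ^ k` times that of `μ` (`prepend_bijective`, `weight_prepend`).
Summing the geometric series over `k` in `[0, ∞]`, where no summability is needed, shows that the
partitions with parts at most `N` have mass `∏ m < N, (1 - y (m + 1))⁻¹` (`tsum_bounded`). These
sets exhaust all partitions, so the total mass is the supremum of these partial products
(`tsum_weight`).

The partial products are bounded iff `∑ m, y (m + 1)` converges: on one side
`1 + y ≤ (1 - y)⁻¹`, on the other `(1 - y)⁻¹ = 1 + y / (1 - y)` with `1 - y ≥ x 0 > 0`. Finally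
`∑ m, y (m + 1) = ∑ i, i * x i` by Tonelli (`summable_tail_iff`).
-/


/-- The set `Par` of all integer partitions: nonincreasing, eventually zero
functions `ℕ → ℕ` (the value at `n` is the part `λ_{n+1}`). -/
def ParInf : Type :=
  {f : ℕ → ℕ // (∀ i j : ℕ, i ≤ j → f j ≤ f i) ∧ ∃ N, ∀ n, N ≤ n → f n = 0}

open Filter Topology
open scoped ENNReal

theorem summable_iff_tsum_ofReal_ne_top {ι : Type*} {f : ι → ℝ} (hf : ∀ i, 0 ≤ f i) :
    Summable f ↔ ∑' i, ENNReal.ofReal (f i) ≠ ⊤ := by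
  refine ⟨fun h => h.tsum_ofReal_ne_top, fun h => ?_⟩
  have := ENNReal.summable_toReal h
  simpa only [ENNReal.toReal_ofReal (hf _)] using this

namespace ParInf

/-- The partitions all of whose parts are at most `N`. -/
def Bounded (N : ℕ) : Type := {lam : ParInf // ∀ i, lam.1 i ≤ N}

/-- The partition obtained by putting `k` parts equal to `N + 1` in front of a partition with
parts at most `N`. -/
def prepend (N : ℕ) (p : ℕ × Bounded N) : Bounded (N + 1) :=
  ⟨⟨fun i => if i < p.1 then N + 1 else p.2.1.1 (i - p.1), by
    obtain ⟨k, ⟨⟨f, hf, M, hM⟩, hb⟩⟩ := p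
    simp only at hb ⊢
    refine ⟨fun i j hij => ?_, M + k, fun n hn => ?_⟩
    · split_ifs
      · exact le_rfl
      · omega
      · exact (hb _).trans (Nat.le_succ N)
      · exact hf _ _ (by omega)
    · rw [if_neg (by omega)]
      exact hM _ (by omega)⟩, by
    intro i
    simp only
    split_ifs
    · exact le_rfl
    · exact (p.2.2 _).trans (Nat.le_succ N)⟩

theorem prepend_apply (N : ℕ) (p : ℕ × Bounded N) (i : ℕ) :
    (prepend N p).1.1 i = if i < p.1 then N + 1 else p.2.1.1 (i - p.1) := rfl

theorem prepend_bijective (N : ℕ) : Function.Bijective (prepend N) := by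
  constructor
  · rintro ⟨k, μ⟩ ⟨l, ν⟩ h
    have h' : ∀ i, (if i < k then N + 1 else μ.1.1 (i - k))
        = if i < l then N + 1 else ν.1.1 (i - l) := fun i => by
      have := congrArg (fun t : Bounded (N + 1) => t.1.1 i) h
      simpa only [prepend_apply] using this
    have hkl : k = l := by
      rcases lt_trichotomy k l with hlt | heq | hlt
      · have h1 := h' k
        have h2 := μ.2 (k - k)
        rw [if_neg (lt_irrefl k), if_pos hlt] at h1
        omega
      · exact heq
      · have h1 := h' l
        have h2 := ν.2 (l - l)
        rw [if_neg (lt_irrefl l), if_pos hlt] at h1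
        omega
    subst hkl
    refine Prod.ext rfl (Subtype.ext (Subtype.ext (funext fun i => ?_)))
    have h1 := h' (i + k)
    rw [if_neg (by omega), if_neg (by omega), Nat.add_sub_cancel] at h1
    exact h1
  · rintro ⟨⟨f, hf, M, hM⟩, hb⟩
    simp only at hb
    -- the number of parts equal to `N + 1` is the first index whose part is at most `N`
    have hex : ∃ n, f n ≤ N := ⟨M, by rw [hM M le_rfl]; exact Nat.zero_le N⟩
    classical
    have hk := Nat.find_spec hex
    have hlt : ∀ i, i < Nat.find hex → f i = N + 1 := fun i hi => by
      have h1 := Nat.find_min hex hi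
      have h2 := hb i
      omega
    refine ⟨(Nat.find hex, ⟨⟨fun i => f (i + Nat.find hex), fun i j hij => hf _ _ (by omega),
      M, fun n hn => hM _ (by omega)⟩, fun i => (hf _ _ (by omega)).trans hk⟩), ?_⟩
    refine Subtype.ext (Subtype.ext (funext fun i => ?_))
    rw [prepend_apply]
    simp only
    split_ifs with hi
    · exact (hlt i hi).symm
    · rw [Nat.sub_add_cancel (by omega)]

/-- The weight `∏ y_{λ_i}` of a partition. -/
noncomputable def weight (y : ℕ → ℝ) (lam : ParInf) : ℝ := ∏' i, y (lam.1 i)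

theorem weight_eq_prod {y : ℕ → ℝ} (h0 : y 0 = 1) (lam : ParInf) {n : ℕ}
    (hn : ∀ i, n ≤ i → lam.1 i = 0) : weight y lam = ∏ i ∈ Finset.range n, y (lam.1 i) := by
  refine tprod_eq_prod fun i hi => ?_
  rw [hn i (by simpa using hi), h0]

theorem weight_nonneg {y : ℕ → ℝ} (h0 : y 0 = 1) (hy : ∀ m, 0 ≤ y m) (lam : ParInf) :
    0 ≤ weight y lam := by
  obtain ⟨n, hn⟩ := lam.2.2
  rw [weight_eq_prod h0 lam hn]
  exact Finset.prod_nonneg fun i _ => hy _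

theorem weight_prepend {y : ℕ → ℝ} (h0 : y 0 = 1) (N : ℕ) (p : ℕ × Bounded N) :
    weight y (prepend N p).1 = y (N + 1) ^ p.1 * weight y p.2.1 := by
  obtain ⟨k, μ⟩ := p
  obtain ⟨n, hn⟩ := μ.1.2.2
  have hn' : ∀ i, k + n ≤ i → (prepend N (k, μ)).1.1 i = 0 := fun i hi => by
    rw [prepend_apply]
    simp only
    rw [if_neg (by omega)]
    exact hn _ (by omega)
  rw [weight_eq_prod h0 _ hn', weight_eq_prod h0 _ hn, Finset.prod_range_add]
  congr 1
  · rw [Finset.prod_congr rfl (g := fun _ => y (N + 1)), Finset.prod_const, Finset.card_range]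
    intro i hi
    rw [prepend_apply, if_pos (Finset.mem_range.mp hi)]
  · refine Finset.prod_congr rfl fun i _ => ?_
    rw [prepend_apply]
    simp

theorem tsum_bounded {y : ℕ → ℝ} (h0 : y 0 = 1) (hy : ∀ m, 0 ≤ y m) (hy1 : ∀ m, y (m + 1) < 1)
    (N : ℕ) : ∑' lam : Bounded N, ENNReal.ofReal (weight y lam.1)
      = ENNReal.ofReal (∏ m ∈ Finset.range N, (1 - y (m + 1))⁻¹) := by
  induction N with
  | zero =>
    -- only the empty partition has all parts equal to `0`
    let e : Bounded 0 := ⟨⟨fun _ => 0, fun _ _ _ => le_rfl, 0, fun _ _ => rfl⟩, fun _ => le_rfl⟩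
    have hu : ∀ l : Bounded 0, l = e := fun l =>
      Subtype.ext (Subtype.ext (funext fun i => Nat.le_zero.mp (l.2 i)))
    rw [tsum_eq_single e fun l hl => absurd (hu l) hl,
      weight_eq_prod h0 e.1 (n := 0) fun _ _ => rfl]
    simp
  | succ N ih =>
    rw [← (Equiv.ofBijective _ (prepend_bijective N)).tsum_eq]
    simp only [Equiv.ofBijective_apply, weight_prepend h0]
    rw [ENNReal.tsum_prod']
    simp only [ENNReal.ofReal_mul (pow_nonneg (hy _) _), ENNReal.tsum_mul_left, ih,
      ENNReal.tsum_mul_right, ENNReal.ofReal_pow (hy _), ENNReal.tsum_geometric]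
    have hpos : 0 < 1 - y (N + 1) := sub_pos.mpr (hy1 N)
    rw [Finset.prod_range_succ, mul_comm (∏ _ ∈ _, _), ENNReal.ofReal_mul (by positivity),
      ENNReal.ofReal_inv_of_pos hpos, ENNReal.ofReal_sub _ (hy _), ENNReal.ofReal_one]

/-- A finite set of partitions has parts bounded by some `N`, so the bounded partitions carry the
whole mass in the limit. -/
theorem tsum_weight {y : ℕ → ℝ} (h0 : y 0 = 1) (hy : ∀ m, 0 ≤ y m) (hy1 : ∀ m, y (m + 1) < 1) :
    ∑' lam : ParInf, ENNReal.ofReal (weight y lam)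
      = ⨆ N, ENNReal.ofReal (∏ m ∈ Finset.range N, (1 - y (m + 1))⁻¹) := by
  simp only [← tsum_bounded h0 hy hy1]
  apply le_antisymm
  · rw [ENNReal.tsum_eq_iSup_sum]
    refine iSup_le fun s => le_iSup_of_le (s.sup fun lam => lam.1 0) ?_
    have hs : ∀ lam ∈ s, ∀ i, lam.1 i ≤ s.sup fun lam => lam.1 0 := fun lam hl i =>
      (lam.2.1 0 i (Nat.zero_le i)).trans (Finset.le_sup (f := fun lam : ParInf => lam.1 0) hl)
    rw [← Finset.sum_coe_sort, ← tsum_fintype (L := .unconditional s)]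
    exact ENNReal.tsum_comp_le_tsum_of_injective
      (f := fun l : s => (⟨l.1, hs l.1 l.2⟩ : Bounded (s.sup fun lam => lam.1 0)))
      (fun a b hab => Subtype.ext (congrArg (fun t : Bounded _ => t.1) hab))
      (fun l => ENNReal.ofReal (weight y l.1))
  · exact iSup_le fun N =>
      ENNReal.tsum_comp_le_tsum_of_injective (f := fun l : Bounded N => l.1)
        Subtype.val_injective (fun l => ENNReal.ofReal (weight y l))

end ParInf

theorem summable_tail_iff {x : ℕ → ℝ} (hx : ∀ i, 0 ≤ x i) (hsx : Summable x) :
    Summable (fun m : ℕ => ∑' j : ℕ, x (m + 1 + j)) ↔ Summable (fun i : ℕ => (i : ℝ) * x i) := by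
  rw [← summable_nat_add_iff (f := fun i : ℕ => (i : ℝ) * x i) 1,
    summable_iff_tsum_ofReal_ne_top fun m => tsum_nonneg fun j => hx _,
    summable_iff_tsum_ofReal_ne_top fun i => mul_nonneg (Nat.cast_nonneg _) (hx _)]
  have hs : ∀ m, Summable fun j => x (m + 1 + j) := fun m => by
    simpa only [add_comm] using (summable_nat_add_iff (m + 1)).mpr hsx
  have key : ∑' m, ENNReal.ofReal (∑' j, x (m + 1 + j))
      = ∑' i : ℕ, ENNReal.ofReal (((i + 1 : ℕ) : ℝ) * x (i + 1)) := by
    simp only [ENNReal.ofReal_tsum_of_nonneg (fun j => hx _) (hs _)]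
    -- both sides sum `x (m + j + 1)` over all pairs `(m, j)`, on the right grouped by `m + j = i`
    rw [← ENNReal.tsum_prod (f := fun m j => ENNReal.ofReal (x (m + 1 + j))),
      ← Finset.HasAntidiagonal.sigmaAntidiagonalEquivProd.tsum_eq, ENNReal.tsum_sigma']
    refine tsum_congr fun n => ?_
    rw [tsum_fintype, Finset.sum_congr rfl (g := fun _ => ENNReal.ofReal (x (n + 1)))]
    · rw [Finset.sum_const, ENNReal.ofReal_mul (Nat.cast_nonneg _), ENNReal.ofReal_natCast]
      simp
    · rintro ⟨⟨a, b⟩, hab⟩ -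
      have : a + b = n := by simpa using hab
      simp only [Finset.HasAntidiagonal.sigmaAntidiagonalEquivProd_apply]
      congr 2
      omega
  rw [key]

theorem multipliable_inv_one_sub {z : ℕ → ℝ} {c : ℝ} (hc : 0 < c) (hz : ∀ m, 0 ≤ z m)
    (hzc : ∀ m, c ≤ 1 - z m) (hs : Summable z) : Multipliable fun m => (1 - z m)⁻¹ := by
  have h : ∀ m, (1 - z m)⁻¹ = 1 + z m / (1 - z m) := fun m => by
    have := (hc.trans_le (hzc m)).ne'
    field_simp
    ring
  simp only [h]
  refine Real.multipliable_one_add_of_summable (Summable.of_nonneg_of_le (fun m => ?_)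
    (fun m => ?_) (hs.div_const c))
  · exact div_nonneg (hz m) (hc.le.trans (hzc m))
  · exact div_le_div_of_nonneg_left (hz m) hc (hzc m)

theorem sum_le_prod_inv_one_sub {z : ℕ → ℝ} (hz : ∀ m, 0 ≤ z m) (hz1 : ∀ m, z m < 1) (N : ℕ) :
    ∑ m ∈ Finset.range N, z m ≤ ∏ m ∈ Finset.range N, (1 - z m)⁻¹ := by
  have h1 : 1 + ∑ m ∈ Finset.range N, z m ≤ ∏ m ∈ Finset.range N, (1 + z m) := by
    induction N with
    | zero => simp
    | succ N ih =>
      rw [Finset.sum_range_succ, Finset.prod_range_succ]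
      have h2 : 0 ≤ ∑ m ∈ Finset.range N, z m := Finset.sum_nonneg fun m _ => hz m
      nlinarith [hz N, mul_nonneg h2 (hz N)]
  refine (le_of_add_le_of_nonneg_right h1 zero_le_one).trans
    (Finset.prod_le_prod (fun m _ => by linarith [hz m]) fun m _ => ?_)
  rw [← one_div, le_div_iff₀ (by linarith [hz1 m])]
  nlinarith [hz m]

/-- with `y_m = ∑_{j=m}^∞ x_j`, the total mass of
`w(λ) = ∏_{i=1}^∞ y_{λ_i}` over all integer partitions is finite iff
`∑ i·x_i < ∞`, in which case it equals the convergent infinite product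
`∏_{m=1}^∞ 1/(1 − y_m)`. -/
theorem imjmc_mass (x : ℕ → ℝ) (hx : ∀ i, 0 ≤ x i) (hx0 : 0 < x 0)
    (hsx : Summable x) (hsum : ∑' i : ℕ, x i = 1) :
    (Summable (fun lam : ParInf => ∏' i : ℕ, ∑' j : ℕ, x (lam.1 i + j))
        ↔ Summable (fun i : ℕ => (i : ℝ) * x i)) ∧
      (Summable (fun i : ℕ => (i : ℝ) * x i) →
        Multipliable (fun m : ℕ => (1 - ∑' j : ℕ, x (m + 1 + j))⁻¹) ∧
          ∑' lam : ParInf, ∏' i : ℕ, ∑' j : ℕ, x (lam.1 i + j)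
            = ∏' m : ℕ, (1 - ∑' j : ℕ, x (m + 1 + j))⁻¹) := by
  rw [← summable_tail_iff hx hsx]
  obtain ⟨y, hydef⟩ : ∃ y : ℕ → ℝ, ∀ m, ∑' j, x (m + j) = y m := ⟨_, fun _ => rfl⟩
  have hy : ∀ m, 0 ≤ y m := fun m => by
    rw [← hydef]
    exact tsum_nonneg fun j => hx _
  have h0 : y 0 = 1 := by
    rw [← hydef]
    simpa using hsum
  have hyx : ∀ m, x 0 ≤ 1 - y (m + 1) := fun m => by
    have h1 := hsx.sum_add_tsum_nat_add (m + 1)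
    have h2 : x 0 ≤ ∑ i ∈ Finset.range (m + 1), x i :=
      Finset.single_le_sum (fun i _ => hx i) (by simp)
    have h3 : ∑' i, x (i + (m + 1)) = y (m + 1) := by
      rw [← hydef]
      exact tsum_congr fun j => by rw [add_comm]
    linarith
  have hy1 : ∀ m, y (m + 1) < 1 := fun m => by linarith [hyx m]
  simp only [hydef]
  change (Summable (ParInf.weight y) ↔ _) ∧ (_ → _ ∧ ∑' lam, ParInf.weight y lam = _)
  have hw := ParInf.weight_nonneg h0 hy
  have hT := ParInf.tsum_weight h0 hy hy1
  have main : Summable (fun m => y (m + 1)) →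
      Multipliable (fun m => (1 - y (m + 1))⁻¹) ∧
      ∑' lam, ENNReal.ofReal (ParInf.weight y lam)
        = ENNReal.ofReal (∏' m, (1 - y (m + 1))⁻¹) := fun hs => by
    have hm := multipliable_inv_one_sub hx0 (fun m => hy (m + 1)) hyx hs
    refine ⟨hm, ?_⟩
    rw [hT]
    refine iSup_eq_of_tendsto (monotone_nat_of_le_succ fun N => ?_)
      ((ENNReal.continuous_ofReal.tendsto _).comp hm.hasProd.tendsto_prod_nat)
    refine ENNReal.ofReal_le_ofReal ?_
    rw [Finset.prod_range_succ]
    refine le_mul_of_one_le_right (Finset.prod_nonneg fun m _ => ?_) ?_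
    · exact inv_nonneg.mpr (by linarith [hy1 m])
    · exact one_le_inv_iff₀.mpr ⟨by linarith [hy1 N], by linarith [hy (N + 1)]⟩
  refine ⟨⟨fun h => ?_, fun h => ?_⟩, fun h => ⟨(main h).1, ?_⟩⟩
  · rw [summable_iff_tsum_ofReal_ne_top hw] at h
    refine summable_of_sum_range_le (fun m => hy (m + 1)) fun N =>
      (sum_le_prod_inv_one_sub (fun m => hy (m + 1)) hy1 N).trans
        ((ENNReal.ofReal_le_iff_le_toReal h).mp ?_)
    rw [hT]
    exact le_iSup (fun N => ENNReal.ofReal (∏ m ∈ Finset.range N, (1 - y (m + 1))⁻¹)) N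
  · rw [summable_iff_tsum_ofReal_ne_top hw, (main h).2]
    exact ENNReal.ofReal_ne_top
  · have hP : 0 ≤ ∏' m, (1 - y (m + 1))⁻¹ :=
      ge_of_tendsto' (main h).1.hasProd.tendsto_prod_nat fun N =>
        Finset.prod_nonneg fun m _ => inv_nonneg.mpr (by linarith [hy1 m])
    have hsw : Summable (ParInf.weight y) := by
      rw [summable_iff_tsum_ofReal_ne_top hw, (main h).2]
      exact ENNReal.ofReal_ne_top
    have h2 := (main h).2
    rw [← ENNReal.ofReal_tsum_of_nonneg hw hsw] at h2
    exact (ENNReal.ofReal_eq_ofReal_iff (tsum_nonneg hw) hP).mp h2
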